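/- Let ε_1, …, ε_n be independent Rademacher random variables, let p ≥ 1 and let q ∈ [1,∞] be its conjugate exponent (1/p + 1/q = 1). For t ∈ ℝ^n set X_t = Σ_{j=1}^n e^{t_j} ε_j, and let A_q be the set of random variables Y (on the same probability space, measurable with respect to ε_1,…,ε_n) with (E|Y|^q)^{1/q} ≤ 1 (interpreted as ess sup |Y| ≤ 1 when q = ∞) and E[Y ε_j] ≥ 0 for every j = 1,…,n. Then for every t ∈ ℝ^n, (E|X_t|^p)^{1/p} = max_{Y ∈ A_q} E[X_t Y]. -/

import Mathlib

open Finset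
open scoped ENNReal

/-- Expectation with respect to the uniform measure on `{-1,1}^n`, encoded via
`Fin n → Bool`. -/
noncomputable def radExp (n : ℕ) (f : (Fin n → Bool) → ℝ) : ℝ :=
  (2 ^ n : ℝ)⁻¹ * ∑ s, f s

/-- The value of the `j`-th Rademacher variable `ε_j` at the sample point `s`. -/
def radSign (n : ℕ) (s : Fin n → Bool) (j : Fin n) : ℝ :=
  if s j then 1 else -1

noncomputable def phiAux (p x : ℝ) : ℝ := SignType.sign x * |x| ^ (p - 1)

lemma phiAux_nonneg (p x : ℝ) (hx : 0 ≤ x) : 0 ≤ phiAux p x := by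
  unfold phiAux
  rcases hx.eq_or_lt with h | h
  · simp [← h]
  · simp [sign_pos h]; positivity

lemma phiAux_neg (p x : ℝ) : phiAux p (-x) = - phiAux p x := by
  unfold phiAux
  rw [Left.sign_neg, abs_neg]; simp

lemma phiAux_mono (p : ℝ) (hp : 1 ≤ p) : Monotone (phiAux p) := by
  have key : ∀ x y : ℝ, 0 ≤ x → x ≤ y → phiAux p x ≤ phiAux p y := by
    intro x y hx hxy
    rcases hx.eq_or_lt with h | h
    · have : phiAux p x = 0 := by simp [← h, phiAux]
      rw [this]; exact phiAux_nonneg p y (hx.trans hxy)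
    · have hy := h.trans_le hxy
      simp only [phiAux, sign_pos h, sign_pos hy, abs_of_pos h, abs_of_pos hy]
      simp
      exact Real.rpow_le_rpow hx hxy (by linarith)
  intro x y hxy
  rcases le_total 0 x with hx | hx
  · exact key x y hx hxy
  · rcases le_total 0 y with hy | hy
    · have h1 := phiAux_nonneg p y hy
      have h2 := phiAux_nonneg p (-x) (by linarith)
      rw [phiAux_neg] at h2
      linarith
    · have := key (-y) (-x) (by linarith) (by linarith)
      rw [phiAux_neg, phiAux_neg] at this
      linarith

lemma mul_phiAux (p x : ℝ) (hp : 1 ≤ p) : x * phiAux p x = |x| ^ p := by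
  unfold phiAux
  by_cases hx : x = 0
  · subst hx; simp; rw [Real.zero_rpow (by linarith)]
  · rw [← mul_assoc, self_mul_sign, Real.rpow_sub_one (abs_ne_zero.2 hx)]
    have := abs_ne_zero.2 hx
    field_simp

lemma abs_phiAux (p x : ℝ) (hp : 1 < p) : |phiAux p x| = |x| ^ (p - 1) := by
  unfold phiAux
  by_cases hx : x = 0
  · subst hx; simp; rw [Real.zero_rpow (by linarith)]
  · rw [abs_mul, abs_of_nonneg (Real.rpow_nonneg (abs_nonneg x) _)]
    rcases lt_or_gt_of_ne hx with h | h
    · simp [sign_neg h]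
    · simp [sign_pos h]

lemma abs_phiAux_one (x : ℝ) : |phiAux 1 x| ≤ 1 := by
  unfold phiAux
  rcases lt_trichotomy x 0 with h | h | h
  · simp [sign_neg h]
  · simp [h]
  · simp [sign_pos h]

lemma corr_nonneg (n : ℕ) (t : Fin n → ℝ) (φ : ℝ → ℝ) (hφ : Monotone φ) (j : Fin n) :
    0 ≤ radExp n (fun s => φ (∑ j, Real.exp (t j) * radSign n s j) * radSign n s j) := by
  unfold radExp
  apply mul_nonneg (by positivity)
  set f : (Fin n → Bool) → ℝ :=
    fun s => φ (∑ j, Real.exp (t j) * radSign n s j) * radSign n s j with hf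
  let fl : (Fin n → Bool) → (Fin n → Bool) := fun s => Function.update s j (!s j)
  have hfl : Function.Involutive fl := by intro s; simp [fl]
  have h1 : ∑ s, f (fl s) = ∑ s, f s := Equiv.sum_comp hfl.toPerm f
  have h2 : 0 ≤ ∑ s, (f s + f (fl s)) := by
    apply Finset.sum_nonneg
    intro s _
    have hs : radSign n (fl s) j = - radSign n s j := by
      simp only [radSign, fl, Function.update_self]
      cases s j <;> simp
    have hX : ∑ i, Real.exp (t i) * radSign n s i - ∑ i, Real.exp (t i) * radSign n (fl s) i
        = 2 * Real.exp (t j) * radSign n s j := by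
      rw [← Finset.sum_sub_distrib, Finset.sum_eq_single j]
      · rw [hs]; ring
      · intro i _ hi
        simp [radSign, fl, Function.update_of_ne hi]
      · simp
    have he := Real.exp_pos (t j)
    simp only [hf, hs]
    have hv : radSign n s j = 1 ∨ radSign n s j = -1 := by
      unfold radSign; split_ifs <;> simp
    rcases hv with hv | hv
    · rw [hv] at hX ⊢
      have := @hφ (∑ i, Real.exp (t i) * radSign n (fl s) i)
        (∑ i, Real.exp (t i) * radSign n s i) (by linarith)
      linarith
    · rw [hv] at hX ⊢
      have := @hφ (∑ i, Real.exp (t i) * radSign n s i)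
        (∑ i, Real.exp (t i) * radSign n (fl s) i) (by linarith)
      linarith
  rw [Finset.sum_add_distrib, h1] at h2
  linarith

lemma radExp_mono (n : ℕ) (f g : (Fin n → Bool) → ℝ) (h : ∀ s, f s ≤ g s) :
    radExp n f ≤ radExp n g := by
  unfold radExp
  exact mul_le_mul_of_nonneg_left (Finset.sum_le_sum fun s _ => h s) (by positivity)

lemma radExp_smul (n : ℕ) (c : ℝ) (f : (Fin n → Bool) → ℝ) :
    radExp n (fun s => c * f s) = c * radExp n f := by
  unfold radExp
  rw [← Finset.mul_sum]; ring

lemma radExp_nonneg (n : ℕ) (f : (Fin n → Bool) → ℝ) (h : ∀ s, 0 ≤ f s) :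
    0 ≤ radExp n f := by
  unfold radExp
  exact mul_nonneg (by positivity) (Finset.sum_nonneg fun s _ => h s)

lemma radExp_holder (n : ℕ) (p q : ℝ) (hpq : p.HolderConjugate q)
    (f g : (Fin n → Bool) → ℝ) :
    radExp n (fun s => f s * g s) ≤
      radExp n (fun s => |f s| ^ p) ^ (1 / p) * radExp n (fun s => |g s| ^ q) ^ (1 / q) := by
  unfold radExp
  have h := Real.inner_le_Lp_mul_Lq Finset.univ f g hpq
  have hk : (0 : ℝ) < (2 ^ n : ℝ)⁻¹ := by positivity
  set k := (2 ^ n : ℝ)⁻¹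
  rw [Real.mul_rpow hk.le (by positivity), Real.mul_rpow hk.le (by positivity)]
  have hkk : k ^ (1 / p) * k ^ (1 / q) = k := by
    rw [← Real.rpow_add hk]
    have := hpq.inv_add_inv_eq_one
    rw [one_div, one_div, this, Real.rpow_one]
  calc _ ≤ k * _ := mul_le_mul_of_nonneg_left h hk.le
    _ = (k ^ (1 / p) * k ^ (1 / q)) * _ := by rw [hkk]
    _ = _ := by ring

/-- For `p ≥ 1` with conjugate exponent `q` (so `1/p + 1/q = 1`, `q ∈ [1,∞]`),
`X_t = Σ_j e^{t_j} ε_j`, and `A_q` the set of random variables `Y` on `{-1,1}^n`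
with `‖Y‖_q ≤ 1` (ess sup when `q = ∞`) and `E[Y ε_j] ≥ 0` for every `j`, we have
`(E|X_t|^p)^{1/p} = max_{Y ∈ A_q} E[X_t Y]`. -/
theorem Lp_norm_eq_max_over_nonneg_correlations (n : ℕ) (p : ℝ) (hp : 1 ≤ p)
    (q : ℝ≥0∞) (hq : 1 / ENNReal.ofReal p + 1 / q = 1) (t : Fin n → ℝ) :
    IsGreatest
      {r : ℝ | ∃ Y : (Fin n → Bool) → ℝ,
        (if q = ⊤ then ∀ s, |Y s| ≤ 1
          else radExp n (fun s => |Y s| ^ q.toReal) ^ (1 / q.toReal) ≤ 1) ∧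
        (∀ j : Fin n, 0 ≤ radExp n (fun s => Y s * radSign n s j)) ∧
        r = radExp n (fun s => (∑ j, Real.exp (t j) * radSign n s j) * Y s)}
      ((radExp n (fun s => |∑ j, Real.exp (t j) * radSign n s j| ^ p)) ^ (1 / p)) := by
  set X : (Fin n → Bool) → ℝ := fun s => ∑ j, Real.exp (t j) * radSign n s j with hX
  rcases hp.eq_or_lt with h1 | h1
  · subst h1
    have hqt : q = ⊤ := by
      simp only [ENNReal.ofReal_one, div_one, one_div] at hq
      have h0 : q⁻¹ = 0 := by
        have h' : (1 : ℝ≥0∞) + q⁻¹ = 1 + 0 := by simpa using hq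
        exact (ENNReal.add_right_inj ENNReal.one_ne_top).1 h'
      exact ENNReal.inv_eq_zero.1 h0
    subst hqt
    simp only [if_true, Real.rpow_one, div_one]
    constructor
    · refine ⟨fun s => phiAux 1 (X s), fun s => abs_phiAux_one _,
        fun j => corr_nonneg n t _ (phiAux_mono 1 le_rfl) j, ?_⟩
      congr 1
      funext s
      have := mul_phiAux 1 (X s) le_rfl
      rw [Real.rpow_one] at this
      exact this.symm
    · rintro r ⟨Y, hY, -, rfl⟩
      apply radExp_mono
      intro s
      calc _ ≤ |X s * Y s| := le_abs_self _
        _ = |X s| * |Y s| := abs_mul _ _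
        _ ≤ |X s| * 1 := mul_le_mul_of_nonneg_left (hY s) (abs_nonneg _)
        _ = _ := mul_one _
  · have hp0 : 0 < p := by linarith
    have hqt : q ≠ ⊤ := by
      rintro rfl
      simp only [one_div, ENNReal.inv_top, add_zero, ENNReal.inv_eq_one,
        ENNReal.ofReal_eq_one] at hq
      linarith
    have hq0 : q ≠ 0 := by
      rintro rfl
      simp at hq
    set r := q.toReal with hr
    have hr0 : 0 < r := ENNReal.toReal_pos hq0 hqt
    have hsum : p⁻¹ + r⁻¹ = 1 := by
      have h := congrArg ENNReal.toReal hq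
      rw [ENNReal.toReal_add (by simp [hp0]) (by simp [hq0])] at h
      simpa [ENNReal.toReal_ofReal hp0.le] using h
    have hpq : p.HolderConjugate r := by
      rw [Real.holderConjugate_iff]; exact ⟨h1, hsum⟩
    simp only [if_neg hqt]
    set M := radExp n (fun s => |X s| ^ p) with hM
    have hM0 : 0 ≤ M := radExp_nonneg _ _ fun s => by positivity
    have hmul : (p - 1) * r = p := by
      field_simp at hsum; linarith
    constructor
    · set c := M ^ (-(1 / r)) with hc
      have hc0 : 0 ≤ c := Real.rpow_nonneg hM0 _
      refine ⟨fun s => c * phiAux p (X s), ?_, fun j => ?_, ?_⟩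
      · have e : (fun s => |c * phiAux p (X s)| ^ r) = fun s => c ^ r * |X s| ^ p := by
          funext s
          rw [abs_mul, abs_of_nonneg hc0, abs_phiAux p _ h1, Real.mul_rpow hc0 (by positivity),
            ← Real.rpow_mul (abs_nonneg _), hmul]
        rw [e, radExp_smul, ← hM]
        have e2 : c ^ r = M⁻¹ := by
          rw [hc, ← Real.rpow_mul hM0, neg_mul, one_div, inv_mul_cancel₀ hr0.ne',
            Real.rpow_neg_one]
        rw [e2]
        apply Real.rpow_le_one (by positivity) inv_mul_le_one (by positivity)
      · have := mul_nonneg hc0 (corr_nonneg n t _ (phiAux_mono p hp) j)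
        rw [← radExp_smul] at this
        simpa only [mul_assoc] using this
      · have e : (fun s => X s * (c * phiAux p (X s))) = fun s => c * |X s| ^ p := by
          funext s
          rw [← mul_phiAux p (X s) hp]; ring
        change _ = radExp n (fun s => X s * (c * phiAux p (X s)))
        rw [e, radExp_smul, ← hM]
        rcases hM0.eq_or_lt with h | h
        · rw [← h, mul_zero, Real.zero_rpow (by positivity)]
        · rw [hc]
          nth_rewrite 3 [← Real.rpow_one M]
          rw [← Real.rpow_add h]
          congr 1
          rw [one_div, one_div]; linarith
    · rintro _ ⟨Y, hY, -, rfl⟩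
      calc _ ≤ M ^ (1 / p) * _ := radExp_holder n p r hpq X Y
        _ ≤ M ^ (1 / p) * 1 := mul_le_mul_of_nonneg_left hY (Real.rpow_nonneg hM0 _)
        _ = _ := mul_one _
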